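/- arXiv:2009.14729 — 5 statements merged into one kernel-verified Lean document; each statement's English description precedes it below -/
import Mathlib

section
/- Scale-lifting lemma (Lemma 2.1 of the paper, with D = 2^k): let w and w' be weight functions on a finite vertex set V with w'(u,v) ≤ w(u,v) for all u,v, let β ∈ ℕ, let ε ≥ 0 be a real number, and let D ∈ [0,∞]. Suppose that for every pair u, v ∈ V with d_w(u,v) ≤ D one has d_{w'}^{(β)}(u,v) ≤ (1+ε)·d_w(u,v). Then for every pair u, v ∈ V with d_w(u,v) ≤ 2D one has d_{w'}^{(2β+1)}(u,v) ≤ (1+ε)·d_w(u,v). -/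
open scoped ENNReal BigOperators

/-- The `t`-hop-bounded distance for a weight function `w` on `V`: the infimum,
over all sequences `u = x 0, x 1, ..., x m = v` with `m <= t`, of
the total weight `Sum_{j<m} w (x j) (x (j+1))`. -/
noncomputable def hopDist {V : Type*} (w : V → V → ℝ≥0∞) (t : ℕ) (u v : V) : ℝ≥0∞ :=
  ⨅ (m : ℕ) (_ : m ≤ t) (x : ℕ → V) (_ : x 0 = u) (_ : x m = v),
    ∑ j ∈ Finset.range m, w (x j) (x (j + 1))

/-- The distance for a weight function `w`: the infimum of hop-bounded distances. -/
noncomputable def graphDist {V : Type*} (w : V → V → ℝ≥0∞) (u v : V) : ℝ≥0∞ :=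
  ⨅ t : ℕ, hopDist w t u v


lemma hopDist_le_walk {V : Type*} (w : V → V → ℝ≥0∞) {t m : ℕ} (h : m ≤ t) (x : ℕ → V) :
    hopDist w t (x 0) (x m) ≤ ∑ j ∈ Finset.range m, w (x j) (x (j + 1)) := by
  unfold hopDist
  exact iInf_le_of_le m (iInf_le_of_le h (iInf_le_of_le x (iInf_le_of_le rfl (iInf_le _ rfl))))

lemma exists_walk_lt {V : Type*} (w : V → V → ℝ≥0∞) {t : ℕ} {u v : V} {a : ℝ≥0∞}
    (h : hopDist w t u v < a) : ∃ m, m ≤ t ∧ ∃ x : ℕ → V, x 0 = u ∧ x m = v ∧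
      ∑ j ∈ Finset.range m, w (x j) (x (j + 1)) < a := by
  unfold hopDist at h
  simp only [iInf_lt_iff] at h
  obtain ⟨m, hm, x, h0, h1, h2⟩ := h
  exact ⟨m, hm, x, h0, h1, h2⟩

lemma hopDist_mono_hop {V : Type*} (w : V → V → ℝ≥0∞) {s t : ℕ} (h : s ≤ t) (u v : V) :
    hopDist w t u v ≤ hopDist w s u v := by
  refine le_of_forall_gt fun a ha => ?_
  obtain ⟨m, hm, x, rfl, rfl, h2⟩ := exists_walk_lt w ha
  exact (hopDist_le_walk w (hm.trans h) x).trans_lt h2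

lemma hopDist_triangle {V : Type*} (w : V → V → ℝ≥0∞) (s t : ℕ) (u v z : V) :
    hopDist w (s + t) u z ≤ hopDist w s u v + hopDist w t v z := by
  refine ENNReal.le_of_forall_pos_le_add fun e he hfin => ?_
  have he' : (e / 2 : ℝ≥0∞) ≠ 0 := by
    simp [he.ne']
  obtain ⟨h1, h2⟩ := ENNReal.add_lt_top.1 hfin
  obtain ⟨m, hm, x, rfl, rfl, hx⟩ := exists_walk_lt w (ENNReal.lt_add_right h1.ne he')
  obtain ⟨n, hn, y, hy0, rfl, hy⟩ := exists_walk_lt w (ENNReal.lt_add_right h2.ne he')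
  let q : ℕ → V := fun j => if j ≤ m then x j else y (j - m)
  have q1 : ∀ j, j ≤ m → q j = x j := fun j hj => by simp [q, hj]
  have q2 : ∀ j, q (m + j) = y j := fun j => by
    rcases Nat.eq_zero_or_pos j with rfl | hj
    · simp [q, hy0]
    · have : ¬ (m + j ≤ m) := by omega
      simp [q, hj.ne']
  have key := hopDist_le_walk w (add_le_add hm hn) q
  rw [q2, q1 0 (Nat.zero_le _), Finset.sum_range_add] at key
  have e1 : ∑ j ∈ Finset.range m, w (q j) (q (j + 1))
      = ∑ j ∈ Finset.range m, w (x j) (x (j + 1)) := by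
    refine Finset.sum_congr rfl fun j hj => ?_
    have := Finset.mem_range.1 hj
    rw [q1 j (by omega), q1 (j + 1) (by omega)]
  have e2 : ∑ j ∈ Finset.range n, w (q (m + j)) (q (m + j + 1))
      = ∑ j ∈ Finset.range n, w (y j) (y (j + 1)) := by
    refine Finset.sum_congr rfl fun j hj => ?_
    rw [add_assoc, q2, q2]
  rw [e1, e2] at key
  refine key.trans ((add_le_add hx.le hy.le).trans (le_of_eq ?_))
  rw [add_add_add_comm, ENNReal.add_halves]

/-- scale-lifting lemma (Lemma 2.1 of the paper). -/
theorem scale_lifting {V : Type*} [Fintype V] (w w' : V → V → ℝ≥0∞)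
    (hwsymm : ∀ a b, w a b = w b a) (hw'symm : ∀ a b, w' a b = w' b a)
    (hle : ∀ a b, w' a b ≤ w a b) (β : ℕ) (ε : ℝ) (hε : 0 ≤ ε) (D : ℝ≥0∞)
    (hyp : ∀ u v, graphDist w u v ≤ D →
      hopDist w' β u v ≤ ENNReal.ofReal (1 + ε) * graphDist w u v) :
    ∀ u v, graphDist w u v ≤ 2 * D →
      hopDist w' (2 * β + 1) u v ≤ ENNReal.ofReal (1 + ε) * graphDist w u v := by
  intro u v huv
  by_cases hD : graphDist w u v ≤ D
  · exact (hopDist_mono_hop w' (by omega) u v).trans (hyp u v hD)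
  have hK1 : (1 : ℝ≥0∞) ≤ ENNReal.ofReal (1 + ε) := by
    rw [← ENNReal.ofReal_one]
    exact ENNReal.ofReal_le_ofReal (by linarith)
  have hKt : ENNReal.ofReal (1 + ε) ≠ ⊤ := ENNReal.ofReal_ne_top
  generalize ENNReal.ofReal (1 + ε) = K at *
  by_cases hL : graphDist w u v = ⊤
  · rw [hL, ENNReal.mul_top (by positivity)]
    exact le_top
  have hgw : ∀ (x : ℕ → V) (m : ℕ),
      graphDist w (x 0) (x m) ≤ ∑ j ∈ Finset.range m, w (x j) (x (j + 1)) := fun x m =>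
    (iInf_le _ m).trans (hopDist_le_walk w le_rfl x)
  generalize hLd : graphDist w u v = L at *
  have hcD : L / 2 ≤ D := ENNReal.div_le_of_le_mul (by rwa [mul_comm])
  have hct : L / 2 ≠ ⊤ := ENNReal.div_ne_top hL (by norm_num)
  have hgap : ∀ᶠ S in nhdsWithin L (Set.Ioi L), ∀ a b : V,
      graphDist w a b + L / 2 ≤ S → graphDist w a b ≤ L / 2 := by
    rw [Filter.eventually_all]
    intro a
    rw [Filter.eventually_all]
    intro b
    by_cases h : graphDist w a b ≤ L / 2
    · exact Filter.Eventually.of_forall fun _ _ => h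
    · have h2 : L < graphDist w a b + L / 2 := by
        calc L = L / 2 + L / 2 := (ENNReal.add_halves L).symm
          _ < _ := ENNReal.add_lt_add_right hct (not_le.1 h)
      filter_upwards [nhdsWithin_le_nhds (Iio_mem_nhds h2)] with S hS h3
      exact absurd (lt_of_le_of_lt h3 hS) (lt_irrefl _)
  have hmain : ∀ᶠ S in nhdsWithin L (Set.Ioi L), hopDist w' (2 * β + 1) u v ≤ K * S := by
    filter_upwards [hgap, self_mem_nhdsWithin] with S hS hLS
    have hLS' : graphDist w u v < S := by rw [hLd]; exact hLS
    obtain ⟨t, ht⟩ := iInf_lt_iff.1 hLS'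
    obtain ⟨m, -, x, rfl, rfl, hx⟩ := exists_walk_lt w ht
    let P : ℕ → ℝ≥0∞ := fun i => ∑ j ∈ Finset.range i, w (x j) (x (j + 1))
    have hPm : L / 2 < P m := by
      refine lt_of_le_of_lt hcD (lt_of_lt_of_le (not_le.1 hD) ?_)
      rw [← hLd]; exact hgw x m
    have hex : ∃ i, L / 2 < P i := ⟨m, hPm⟩
    classical
    obtain ⟨i, hi⟩ : ∃ i, Nat.find hex = i + 1 := by
      refine Nat.exists_eq_succ_of_ne_zero fun h0 => ?_
      have := Nat.find_spec hex
      rw [h0] at this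
      simp [P] at this
    have hi1 : L / 2 < P (i + 1) := hi ▸ Nat.find_spec hex
    have hi0 : P i ≤ L / 2 := not_lt.1 (Nat.find_min hex (by omega))
    have him : i + 1 ≤ m := hi ▸ Nat.find_min' hex hPm
    obtain ⟨n, rfl⟩ := Nat.exists_eq_add_of_le him
    set R : ℝ≥0∞ := ∑ j ∈ Finset.range n, w (x (i + 1 + j)) (x (i + 1 + j + 1)) with hR
    have hsum : P (i + 1) + R < S := by
      rw [Finset.sum_range_add] at hx
      exact hx
    have hdR : graphDist w (x (i + 1)) (x (i + 1 + n)) ≤ R := hgw (fun j => x (i + 1 + j)) n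
    have hd2 := hS (x (i + 1)) (x (i + 1 + n)) (by
      rw [add_comm]
      exact (add_le_add hi1.le hdR).trans hsum.le)
    have b1 := hyp (x 0) (x i) (((hgw x i).trans hi0).trans hcD)
    have b2 := hyp _ _ (hd2.trans hcD)
    have b3 : hopDist w' 1 (x i) (x (i + 1)) ≤ w (x i) (x (i + 1)) := by
      have := hopDist_le_walk w' (le_refl 1) (fun j => x (i + j))
      simp at this
      exact this.trans (hle _ _)
    have hP1 : P (i + 1) = P i + w (x i) (x (i + 1)) := Finset.sum_range_succ _ _
    have t1 := hopDist_triangle w' (β + 1) β (x 0) (x (i + 1)) (x (i + 1 + n))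
    have t2 := hopDist_triangle w' β 1 (x 0) (x i) (x (i + 1))
    have e : β + 1 + β = 2 * β + 1 := by ring
    rw [e] at t1
    calc _ ≤ _ := t1
      _ ≤ (K * P i + K * w (x i) (x (i + 1))) + K * R := by
        refine add_le_add (t2.trans (add_le_add ?_ ?_)) ?_
        · exact b1.trans (mul_le_mul_right (hgw x i) K)
        · exact b3.trans (le_mul_of_one_le_left zero_le hK1)
        · exact b2.trans (mul_le_mul_right hdR K)
      _ = K * (P (i + 1) + R) := by rw [hP1]; ring
      _ ≤ K * S := mul_le_mul_right hsum.le K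
  have hne : (nhdsWithin L (Set.Ioi L)).NeBot := nhdsGT_neBot_of_exists_gt ⟨⊤, lt_top_iff_ne_top.2 hL⟩
  exact ge_of_tendsto (((ENNReal.continuous_const_mul hKt).tendsto L).mono_left nhdsWithin_le_nhds) hmain
end

section
/- Fixed growth stage bound (Lemma 2.8): let n ≥ 1, κ ≥ 1, and ρ > 0 be real numbers with κρ ≥ 1, and set i_0 = ⌊log₂(κρ)⌋. Let (p_i)_{i∈ℕ} be a sequence of nonnegative reals such that p_{i_0+1} ≤ n^{1 − (2^{i_0+1} − 1)/κ} and p_{i+1} ≤ p_i · n^{−ρ} for all i ≥ i_0 + 1. Then for every i ≥ i_0 + 1 one has p_i ≤ n^{1 + 1/κ − (i − i_0)ρ}. -/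
/-- fixed growth stage bound (Lemma 2.8 of the paper). -/
theorem fixed_growth_bound (n κ ρ : ℝ) (hn : 1 ≤ n) (hκ : 1 ≤ κ) (hρ : 0 < ρ)
    (hκρ : 1 ≤ κ * ρ)
    (p : ℕ → ℝ) (hp : ∀ i, 0 ≤ p i)
    (hinit : p (⌊Real.logb 2 (κ * ρ)⌋₊ + 1) ≤
      n ^ (1 - ((2 : ℝ) ^ (⌊Real.logb 2 (κ * ρ)⌋₊ + 1) - 1) / κ))
    (hrec : ∀ i, ⌊Real.logb 2 (κ * ρ)⌋₊ + 1 ≤ i → p (i + 1) ≤ p i * n ^ (-ρ)) :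
    ∀ i, ⌊Real.logb 2 (κ * ρ)⌋₊ + 1 ≤ i →
      p i ≤ n ^ (1 + 1 / κ - ((i : ℝ) - (⌊Real.logb 2 (κ * ρ)⌋₊ : ℝ)) * ρ) := by
  have hκ0 : 0 < κ := by linarith
  have hn0 : 0 < n := by linarith
  have hkey : κ * ρ ≤ (2 : ℝ) ^ (⌊Real.logb 2 (κ * ρ)⌋₊ + 1) := by
    have h := Nat.lt_floor_add_one (Real.logb 2 (κ * ρ))
    rw [Real.logb_lt_iff_lt_rpow (by norm_num) (by linarith)] at h
    have h2 := h.le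
    rw [← Real.rpow_natCast]
    push_cast
    exact h2
  generalize ⌊Real.logb 2 (κ * ρ)⌋₊ = k at *
  intro i hi
  induction i, hi using Nat.le_induction with
  | base =>
    refine hinit.trans (Real.rpow_le_rpow_of_exponent_le hn ?_)
    have h1 : ρ ≤ (2 : ℝ) ^ (k + 1) / κ := by
      rw [le_div_iff₀ hκ0]
      linarith
    rw [sub_div]
    push_cast
    linarith
  | succ i hi ih =>
    refine (hrec i hi).trans ?_
    refine (mul_le_mul_of_nonneg_right ih (Real.rpow_nonneg hn0.le _)).trans ?_
    rw [← Real.rpow_add hn0]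
    apply le_of_eq
    congr 1
    push_cast
    ring
end

section
/- Bound on the number of clusters in the last phase (equation (4) of the paper): let n ≥ 1, κ ≥ 1, and 0 < ρ < 1/2 be real numbers with κρ ≥ 1; set i_0 = ⌊log₂(κρ)⌋ and ℓ = ⌊log₂(κρ)⌋ + ⌈(κ+1)/(κρ)⌉ − 1. Let (p_i)_{i∈ℕ} be a sequence of nonnegative reals such that p_0 ≤ n, p_{i+1} ≤ p_i · n^{−2^i/κ} for all i ≤ i_0, and p_{i+1} ≤ p_i · n^{−ρ} for all i with i_0 + 1 ≤ i ≤ ℓ − 1. Then p_ℓ ≤ n^ρ. -/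
/-- bound on the number of clusters in the last phase
(equation (4) of the paper). -/
theorem last_phase_bound (n κ ρ : ℝ) (hn : 1 ≤ n) (hκ : 1 ≤ κ)
    (hρ0 : 0 < ρ) (hρ : ρ < 1 / 2) (hκρ : 1 ≤ κ * ρ)
    (p : ℕ → ℝ) (hp : ∀ i, 0 ≤ p i) (h0 : p 0 ≤ n)
    (hrec1 : ∀ i ≤ ⌊Real.logb 2 (κ * ρ)⌋₊,
      p (i + 1) ≤ p i * n ^ (-((2 : ℝ) ^ i) / κ))
    (hrec2 : ∀ i, ⌊Real.logb 2 (κ * ρ)⌋₊ + 1 ≤ i →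
      i ≤ (⌊Real.logb 2 (κ * ρ)⌋₊ + ⌈(κ + 1) / (κ * ρ)⌉₊ - 1) - 1 →
      p (i + 1) ≤ p i * n ^ (-ρ)) :
    p (⌊Real.logb 2 (κ * ρ)⌋₊ + ⌈(κ + 1) / (κ * ρ)⌉₊ - 1) ≤ n ^ ρ := by
  have hn0 : 0 < n := by linarith
  have hκ0 : 0 < κ := by linarith
  have hκρ0 : 0 < κ * ρ := by linarith
  have hpow : κ * ρ ≤ (2 : ℝ) ^ (⌊Real.logb 2 (κ * ρ)⌋₊ + 1) := by
    have h := (Nat.lt_floor_add_one (Real.logb 2 (κ * ρ))).le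
    rw [Real.logb_le_iff_le_rpow (by norm_num) hκρ0] at h
    exact_mod_cast h
  have hc1 := Nat.le_ceil ((κ + 1) / (κ * ρ))
  have hc2 : 2 < (κ + 1) / (κ * ρ) := by
    rw [lt_div_iff₀ hκρ0]
    nlinarith
  generalize ⌊Real.logb 2 (κ * ρ)⌋₊ = m at *
  generalize ⌈(κ + 1) / (κ * ρ)⌉₊ = c at *
  have hc3 : 2 < c := by exact_mod_cast hc2.trans_le hc1
  have A : ∀ i, i ≤ m + 1 → p i ≤ n ^ (1 - ((2 : ℝ) ^ i - 1) / κ) := by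
    intro i
    induction i with
    | zero => intro _; simpa using h0
    | succ k ih =>
      intro hk
      refine (hrec1 k (by omega)).trans ((mul_le_mul_of_nonneg_right (ih (by omega))
        (Real.rpow_nonneg hn0.le _)).trans (le_of_eq ?_))
      rw [← Real.rpow_add hn0]
      congr 1
      field_simp
      ring
  have B : ∀ j : ℕ, j + 2 ≤ c → p (m + 1 + j) ≤ n ^ (1 - ((2 : ℝ) ^ (m + 1) - 1) / κ - j * ρ) := by
    intro j
    induction j with
    | zero => intro _; simpa using A (m + 1) le_rfl
    | succ k ih =>
      intro hk
      refine (hrec2 (m + 1 + k) (by omega) (by omega)).trans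
        ((mul_le_mul_of_nonneg_right (ih (by omega))
        (Real.rpow_nonneg hn0.le _)).trans (le_of_eq ?_))
      rw [← Real.rpow_add hn0]
      congr 1
      push_cast
      ring
  obtain ⟨d, rfl⟩ : ∃ d, c = d + 2 := ⟨c - 2, by omega⟩
  have hB := B d le_rfl
  have e : m + (d + 2) - 1 = m + 1 + d := by omega
  rw [e]
  refine hB.trans (Real.rpow_le_rpow_of_exponent_le hn ?_)
  rw [div_le_iff₀ hκρ0] at hc1
  push_cast at hc1
  have : 1 - d * ρ - ρ ≤ ((2 : ℝ) ^ (m + 1) - 1) / κ := by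
    rw [le_div_iff₀ hκ0]
    nlinarith
  linarith
end

section
/- Bound on the hop recursion (a corrected form of Lemma 3.3): let ε > 0 be a real number, and define a sequence by h_0 = 1 and h_{i+1} = (1/ε + 2)·(h_i + 1) + 2(i+1) + 1 for all i ∈ ℕ. Then for every i ∈ ℕ, h_i ≤ (1/ε + 5)^{i+1}. -/
/-- bound on the hop recursion (corrected form of Lemma 3.3). -/
theorem hop_recursion_bound (ε : ℝ) (hε : 0 < ε) (h : ℕ → ℝ)
    (h0 : h 0 = 1)
    (hrec : ∀ i : ℕ, h (i + 1) = (1 / ε + 2) * (h i + 1) + 2 * ((i : ℝ) + 1) + 1) :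
    ∀ i : ℕ, h i ≤ (1 / ε + 5) ^ (i + 1) := by
  have hx : 0 < 1 / ε := by positivity
  generalize 1 / ε = x at *
  have key : ∀ i : ℕ, x + 5 + 2 * (i : ℝ) ≤ (x + 5) ^ (i + 1) := by
    intro i
    induction i with
    | zero => simp
    | succ k ih =>
      have hk : (0 : ℝ) ≤ k := Nat.cast_nonneg k
      rw [pow_succ]
      push_cast
      have h1 := mul_le_mul_of_nonneg_right ih (by linarith : (0 : ℝ) ≤ x + 5)
      nlinarith [mul_nonneg hk hx.le]
  intro i
  induction i with
  | zero => rw [h0]; norm_num; linarith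
  | succ k ih =>
    have hk : (0 : ℝ) ≤ k := Nat.cast_nonneg k
    have h1 := mul_le_mul_of_nonneg_left ih (by linarith : (0 : ℝ) ≤ x + 2)
    have h2 := key k
    rw [hrec, pow_succ _ (k + 1)]
    nlinarith
end

section
/- Existence form of the aspect-ratio-free hopset theorem (Theorem C.1, without the computational complexity claims): there is an absolute constant c > 0 with the following property. Let V be a finite set with n = |V| ≥ 2, and let w : V → V → [0,∞] be a weight function with strictly positive off-diagonal values such that d_w(u,v) < ∞ for all u,v (G is connected). Let 0 < ε < 1/2 be real, κ ≥ 2 an integer, and 0 < ρ < 1/2 real with κρ ≥ 1, and set ℓ = ⌊log₂(κρ)⌋ + ⌈(κ+1)/(κρ)⌉ − 1 and β = ⌈(c · (log₂ n)² · (log₂(κρ) + 1/ρ) / ε)^ℓ⌉. Then there exists a weight function w_H on V whose set of pairs with finite value (the hopset edges) has cardinality at most c · n^{1+1/κ} · log₂ n, such that, with w' the pointwise minimum of w and w_H, every pair u, v ∈ V satisfies d_w(u,v) ≤ d_{w'}^{(β)}(u,v) ≤ (1+ε) · d_w(u,v). In particular, both the size of the hopset and its hopbound β are independent of the aspect ratio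 of the graph. -/
open scoped ENNReal BigOperators

theorem hop_le_of {V : Type*} {w : V → V → ℝ≥0∞} {t m : ℕ} {u v : V} (hm : m ≤ t) (x : ℕ → V)
    (h0 : x 0 = u) (h1 : x m = v) : hopDist w t u v ≤ ∑ j ∈ Finset.range m, w (x j) (x (j + 1)) := by
  unfold hopDist
  exact iInf_le_of_le m (iInf_le_of_le hm (iInf_le_of_le x (iInf_le_of_le h0 (iInf_le_of_le h1 le_rfl))))

theorem le_hop {V : Type*} {w : V → V → ℝ≥0∞} {t : ℕ} {u v : V} {c : ℝ≥0∞}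
    (h : ∀ m ≤ t, ∀ x : ℕ → V, x 0 = u → x m = v → c ≤ ∑ j ∈ Finset.range m, w (x j) (x (j + 1))) :
    c ≤ hopDist w t u v := by
  unfold hopDist
  simp only [le_iInf_iff]
  exact h

theorem hop_self {V : Type*} (w : V → V → ℝ≥0∞) (t : ℕ) (u : V) : hopDist w t u u = 0 := by
  have := hop_le_of (w := w) (t := t) (Nat.zero_le t) (fun _ => u) rfl rfl
  simpa using this

theorem hop_mono {V : Type*} {w : V → V → ℝ≥0∞} {s t : ℕ} (h : s ≤ t) (u v : V) :
    hopDist w t u v ≤ hopDist w s u v :=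
  le_hop fun _ hm x h0 h1 => hop_le_of (hm.trans h) x h0 h1

theorem hop_edge {V : Type*} (w : V → V → ℝ≥0∞) (u v : V) : hopDist w 1 u v ≤ w u v := by
  have := hop_le_of (w := w) (t := 1) (m := 1) le_rfl (fun j => if j = 0 then u else v) rfl rfl
  simpa using this

theorem hop_prep {V : Type*} (w : V → V → ℝ≥0∞) (t : ℕ) (u v y : V) :
    hopDist w (t + 1) u y ≤ w u v + hopDist w t v y := by
  rw [hopDist.eq_def w t]
  simp only [ENNReal.add_iInf, le_iInf_iff]
  intro m hm x h0 h1
  have := hop_le_of (w := w) (t := t + 1) (m := m + 1) (u := u) (v := y) (by omega)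
    (fun j => Nat.casesOn j u x) rfl h1
  rw [Finset.sum_range_succ'] at this
  simpa [h0, add_comm] using this

theorem hop_tri {V : Type*} (w : V → V → ℝ≥0∞) (s t : ℕ) (u v y : V) :
    hopDist w (s + t) u y ≤ hopDist w s u v + hopDist w t v y := by
  rw [hopDist.eq_def w s]
  simp only [ENNReal.iInf_add, le_iInf_iff]
  intro m hm x h0 h1
  refine (hop_mono (show m + t ≤ s + t by omega) _ _).trans ?_
  clear hm
  induction m generalizing u x with
  | zero => simp at *; subst h0 h1; simp
  | succ m ih =>
    rw [Finset.sum_range_succ']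
    have h2 := ih (x 1) (fun j => x (j + 1)) rfl h1
    have h3 := hop_prep w (m + t) u (x 1) y
    rw [show m + 1 + t = m + t + 1 by omega]
    refine h3.trans ?_
    calc _ ≤ w u (x 1) + (∑ j ∈ Finset.range m, w (x (j + 1)) (x (j + 1 + 1)) + hopDist w t v y) := by
          gcongr
      _ = _ := by simp [h0]; ring

theorem gd_le_hop {V : Type*} (w : V → V → ℝ≥0∞) (t : ℕ) (u v : V) :
    graphDist w u v ≤ hopDist w t u v := iInf_le _ t

theorem gd_self {V : Type*} (w : V → V → ℝ≥0∞) (u : V) : graphDist w u u = 0 :=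
  le_antisymm ((gd_le_hop w 0 u u).trans (hop_self w 0 u).le) zero_le

theorem gd_tri {V : Type*} (w : V → V → ℝ≥0∞) (u v y : V) :
    graphDist w u y ≤ graphDist w u v + graphDist w v y := by
  rw [graphDist.eq_def w u v, graphDist.eq_def w v y]
  simp only [ENNReal.iInf_add, ENNReal.add_iInf, le_iInf_iff]
  intro t s
  exact (gd_le_hop w _ u y).trans (hop_tri w _ _ u v y)

inductive Wk {V : Type*} (w : V → V → ℝ≥0∞) : V → V → ℝ≥0∞ → Prop
  | nil (u : V) : Wk w u u 0
  | cons (u v y : V) (D : ℝ≥0∞) (h : Wk w v y D) : Wk w u y (w u v + D)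

theorem Wk.append {V : Type*} {w : V → V → ℝ≥0∞} {u v y : V} {D R : ℝ≥0∞} (h : Wk w u v D)
    (h' : Wk w v y R) : Wk w u y (D + R) := by
  induction h with
  | nil u => simpa using h'
  | cons a b c E _ ih => rw [add_assoc]; exact Wk.cons _ _ _ _ (ih h')

theorem Wk.rev {V : Type*} {w : V → V → ℝ≥0∞} (hs : ∀ a b, w a b = w b a) {u v : V} {D : ℝ≥0∞}
    (h : Wk w u v D) : Wk w v u D := by
  induction h with
  | nil u => exact Wk.nil u
  | cons a b c E _ ih =>
    have := ih.append (Wk.cons b a a 0 (Wk.nil a))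
    rw [add_comm, hs a b]; simpa using this

theorem wk_of_fun {V : Type*} (w : V → V → ℝ≥0∞) (m : ℕ) (x : ℕ → V) :
    Wk w (x 0) (x m) (∑ j ∈ Finset.range m, w (x j) (x (j + 1))) := by
  induction m generalizing x with
  | zero => simpa using Wk.nil (x 0)
  | succ m ih =>
    rw [Finset.sum_range_succ', add_comm (∑ k ∈ Finset.range m, _)]
    exact Wk.cons _ _ _ _ (ih (fun j => x (j + 1)))

theorem Wk.gd {V : Type*} {w : V → V → ℝ≥0∞} {u v : V} {D : ℝ≥0∞}
    (h : Wk w u v D) : graphDist w u v ≤ D := by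
  induction h with
  | nil u => exact (gd_self w u).le
  | cons a b c E _ ih =>
    refine (gd_tri w a b c).trans ?_
    gcongr
    exact (gd_le_hop w 1 _ _).trans (hop_edge w a b)

theorem le_gd {V : Type*} {w : V → V → ℝ≥0∞} {u v : V} {c : ℝ≥0∞}
    (h : ∀ D, Wk w u v D → c ≤ D) : c ≤ graphDist w u v := by
  refine le_iInf fun t => le_hop fun m _ x h0 h1 => ?_
  subst h0 h1
  exact h _ (wk_of_fun w m x)

theorem gd_symm {V : Type*} {w : V → V → ℝ≥0∞} (hs : ∀ a b, w a b = w b a) (u v : V) :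
    graphDist w u v = graphDist w v u :=
  le_antisymm (le_gd fun _ h => (h.rev hs).gd) (le_gd fun _ h => (h.rev hs).gd)

/-- lower bound -/
theorem gd_le_hop_of_le {V : Type*} {w w' : V → V → ℝ≥0∞} (h : ∀ a b, graphDist w a b ≤ w' a b)
    (t : ℕ) (u v : V) : graphDist w u v ≤ hopDist w' t u v := by
  refine le_hop fun m _ x h0 h1 => ?_
  have hw := wk_of_fun w' m x
  rw [h0, h1] at hw
  generalize (∑ j ∈ Finset.range m, w' (x j) (x (j + 1))) = S at hw
  clear h0 h1
  induction hw with
  | nil u => exact (gd_self w _).le.trans zero_le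
  | cons a b c E _ ih =>
    refine (gd_tri w a b c).trans ?_
    gcongr
    exact h a b

theorem hop_symm_le {V : Type*} {w : V → V → ℝ≥0∞} (hs : ∀ a b, w a b = w b a) (t : ℕ) (u v : V) :
    hopDist w t u v ≤ hopDist w t v u := by
  refine le_hop fun m hm x h0 h1 => ?_
  refine (hop_le_of hm (fun j => x (m - j)) (by simpa using h1) (by simpa using h0)).trans ?_
  rw [← Finset.sum_range_reflect]
  refine le_of_eq (Finset.sum_congr rfl fun j hj => ?_)
  have hj' := Finset.mem_range.1 hj
  rw [hs]
  congr 2 <;> omega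

theorem hop_symm {V : Type*} {w : V → V → ℝ≥0∞} (hs : ∀ a b, w a b = w b a) (t : ℕ) (u v : V) :
    hopDist w t u v = hopDist w t v u := le_antisymm (hop_symm_le hs t u v) (hop_symm_le hs t v u)

/-- greedy prefix -/
theorem Wk.split {V : Type*} {w : V → V → ℝ≥0∞} {u y : V} {D : ℝ≥0∞} (h : Wk w u y D)
    (τ c : ℝ≥0∞) (hc : c ≤ τ) : c + D ≤ τ ∨ ∃ v v' L R, Wk w u v L ∧ c + L ≤ τ ∧ Wk w v' y R ∧
      D = L + w v v' + R ∧ τ ≤ c + (L + w v v') := by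
  induction h generalizing c with
  | nil u => left; simpa using hc
  | cons a b y E hE ih =>
    by_cases hw : c + w a b ≤ τ
    · rcases ih (c + w a b) hw with h | ⟨v, v', L, R, h1, h2, h3, h4, h5⟩
      · left; rwa [← add_assoc]
      · right
        refine ⟨v, v', w a b + L, R, Wk.cons _ _ _ _ h1, by rwa [← add_assoc], h3, ?_, ?_⟩
        · rw [h4]; ring
        · refine h5.trans (le_of_eq (by ring))
    · right
      exact ⟨a, b, 0, E, Wk.nil a, by simpa using hc, hE, by simp, by simpa using (not_le.1 hw).le⟩

theorem seg {V : Type*} {w w' : V → V → ℝ≥0∞} (hs : ∀ a b, w a b = w b a)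
    (hs' : ∀ a b, w' a b = w' b a) (hle : ∀ a b, graphDist w a b ≤ w' a b)
    (A : Set V) (h : ℕ) (a : ℝ≥0∞)
    (P : ∀ u v D, Wk w u v D → hopDist w' h u v ≤ (1 + a) * D ∨ ∃ z ∈ A, hopDist w' h u z ≤ 2 * D)
    (u y : V) (D : ℝ≥0∞) (hD : Wk w u y D) :
    hopDist w' h u y ≤ (1 + a) * D ∨ ∃ zl ∈ A, ∃ zr ∈ A, hopDist w' h u zl ≤ 2 * D ∧
      hopDist w' h zr y ≤ 2 * D ∧ graphDist w zl u ≤ 2 * D ∧ graphDist w y zr ≤ 2 * D := by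
  rcases P u y D hD with h1 | ⟨zl, hzl, h1⟩
  · exact Or.inl h1
  rcases P y u D (hD.rev hs) with h2 | ⟨zr, hzr, h2⟩
  · rw [hop_symm hs'] at h2; exact Or.inl h2
  refine Or.inr ⟨zl, hzl, zr, hzr, h1, ?_, ?_, ?_⟩
  · rwa [hop_symm hs']
  · rw [gd_symm hs]; exact (gd_le_hop_of_le hle h _ _).trans h1
  · exact (gd_le_hop_of_le hle h _ _).trans h2

theorem core {V : Type*} {w w' : V → V → ℝ≥0∞} (hs : ∀ a b, w a b = w b a)
    (hs' : ∀ a b, w' a b = w' b a) (hle : ∀ a b, graphDist w a b ≤ w' a b)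
    (hww : ∀ a b, w' a b ≤ w a b)
    (A : Set V) (h : ℕ) (a τ : ℝ≥0∞) (hτ : τ ≠ ⊤)
    (P : ∀ u v D, Wk w u v D → hopDist w' h u v ≤ (1 + a) * D ∨ ∃ z ∈ A, hopDist w' h u z ≤ 2 * D)
    (N : ℕ) : ∀ (u y : V) (D : ℝ≥0∞), Wk w u y D → D ≤ (N + 1 : ℕ) * τ →
    hopDist w' ((N + 1) * (h + 1)) u y ≤ (1 + a) * D ∨
    ∃ zl ∈ A, ∃ zr ∈ A, ∃ (N1 N3 : ℕ) (R1 M R3 : ℝ≥0∞), N1 + N3 ≤ N ∧ R1 + M + R3 = D ∧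
      hopDist w' (N1 * (h + 1) + h) u zl ≤ (1 + a) * R1 + 2 * τ ∧
      hopDist w' (N3 * (h + 1) + h + 1) zr y ≤ (1 + a) * R3 + 2 * τ ∧
      graphDist w zl zr ≤ M + 4 * τ ∧ graphDist w u zr ≤ R1 + M + 2 * τ := by
  have single : ∀ (N : ℕ) (u y : V) (D : ℝ≥0∞), Wk w u y D → D ≤ τ → 
      hopDist w' ((N + 1) * (h + 1)) u y ≤ (1 + a) * D ∨
      ∃ zl ∈ A, ∃ zr ∈ A, ∃ (N1 N3 : ℕ) (R1 M R3 : ℝ≥0∞), N1 + N3 ≤ N ∧ R1 + M + R3 = D ∧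
      hopDist w' (N1 * (h + 1) + h) u zl ≤ (1 + a) * R1 + 2 * τ ∧
      hopDist w' (N3 * (h + 1) + h + 1) zr y ≤ (1 + a) * R3 + 2 * τ ∧
      graphDist w zl zr ≤ M + 4 * τ ∧ graphDist w u zr ≤ R1 + M + 2 * τ := by
    intro N u y D hD hDτ
    rcases seg hs hs' hle A h a P u y D hD with h1 | ⟨zl, hzl, zr, hzr, h1, h2, h3, h4⟩
    · left
      exact (hop_mono (by nlinarith) _ _).trans h1
    · right
      refine ⟨zl, hzl, zr, hzr, 0, 0, 0, D, 0, by omega, by simp, ?_, ?_, ?_, ?_⟩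
      · simp only [zero_mul, zero_add, mul_zero]
        exact h1.trans (by gcongr)
      · simp only [zero_mul, zero_add, mul_zero]
        exact (hop_mono (by omega) _ _).trans (h2.trans (by gcongr))
      · calc graphDist w zl zr ≤ graphDist w zl u + (graphDist w u y + graphDist w y zr) :=
              (gd_tri w zl u zr).trans (add_le_add le_rfl (gd_tri w u y zr))
          _ ≤ 2 * τ + (D + 2 * τ) := by
              gcongr
              · exact h3.trans (by gcongr)
              · exact hD.gd
              · exact h4.trans (by gcongr)
          _ = _ := by ring
      · calc graphDist w u zr ≤ graphDist w u y + graphDist w y zr := gd_tri w u y zr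
          _ ≤ D + 2 * τ := by
              gcongr
              · exact hD.gd
              · exact h4.trans (by gcongr)
          _ = _ := by ring
  induction N with
  | zero => intro u y D hD hDτ; exact single 0 u y D hD (by simpa using hDτ)
  | succ N ih =>
    intro u y D hD hDτ
    rcases hD.split τ 0 zero_le with h0 | ⟨v, v', L, R, hL, hLτ, hR, hDe, hgt⟩
    · exact single _ u y D hD (by simpa using h0)
    rw [zero_add] at hLτ hgt
    have hRτ : R ≤ (N + 1 : ℕ) * τ := by
      have h1 : τ + R ≤ τ + (N + 1 : ℕ) * τ := by
        calc τ + R ≤ L + w v v' + R := by gcongr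
          _ = D := hDe.symm
          _ ≤ _ := hDτ
          _ = _ := by push_cast; ring
      exact (ENNReal.add_le_add_iff_left hτ).1 h1
    have hone : ∀ X : ℝ≥0∞, X ≤ (1 + a) * X := fun X => by
      calc X = 1 * X := by simp
        _ ≤ _ := by gcongr; simp
    have hedge : hopDist w' 1 v v' ≤ w v v' := (hop_edge w' v v').trans (hww _ _)
    have hgedge : graphDist w v v' ≤ w v v' := (gd_le_hop w 1 _ _).trans (hop_edge w v v')
    rcases seg hs hs' hle A h a P u v L hL with h1 | ⟨zl, hzl, zr, hzr, h1, h2, h3, h4⟩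
    · have hpre : hopDist w' (h + 1) u v' ≤ (1 + a) * (L + w v v') :=
        calc _ ≤ hopDist w' h u v + hopDist w' 1 v v' := hop_tri w' h 1 u v v'
          _ ≤ (1 + a) * L + (1 + a) * w v v' := add_le_add h1 (hedge.trans (hone _))
          _ = _ := by ring
      rcases ih v' y R hR hRτ with g1 | ⟨zl, hzl, zr, hzr, N1, N3, R1, M, R3, g0, g1, g2, g3, g4, g5⟩
      · left
        calc hopDist w' ((N + 1 + 1) * (h + 1)) u y 
            = hopDist w' ((h + 1) + (N + 1) * (h + 1)) u y := by congr 1; ring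
          _ ≤ _ := hop_tri w' _ _ u v' y
          _ ≤ (1 + a) * (L + w v v') + (1 + a) * R := add_le_add hpre g1
          _ = _ := by rw [hDe]; ring
      · right
        refine ⟨zl, hzl, zr, hzr, N1 + 1, N3, L + w v v' + R1, M, R3, by omega, ?_, ?_, g3, g4, ?_⟩
        · rw [hDe, ← g1]; ring
        · calc hopDist w' ((N1 + 1) * (h + 1) + h) u zl
              = hopDist w' ((h + 1) + (N1 * (h + 1) + h)) u zl := by congr 1; ring
            _ ≤ _ := hop_tri w' _ _ u v' zl
            _ ≤ (1 + a) * (L + w v v') + ((1 + a) * R1 + 2 * τ) := add_le_add hpre g2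
            _ = _ := by ring
        · calc graphDist w u zr ≤ graphDist w u v + (graphDist w v v' + graphDist w v' zr) :=
              (gd_tri w u v zr).trans (add_le_add le_rfl (gd_tri w v v' zr))
            _ ≤ L + (w v v' + (R1 + M + 2 * τ)) := by
              gcongr
              exact hL.gd
            _ = _ := by ring
    · have e1 : graphDist w zl u ≤ 2 * τ := h3.trans (by gcongr)
      have e2 : graphDist w v zr ≤ 2 * τ := h4.trans (by gcongr)
      right
      rcases ih v' y R hR hRτ with g1 | ⟨zl', hzl', zr', hzr', N1, N3, R1, M, R3, g0, g1, g2, g3, g4, g5⟩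
      · refine ⟨zl, hzl, zr, hzr, 0, N + 1, 0, L, w v v' + R, by omega, ?_, ?_, ?_, ?_, ?_⟩
        · rw [hDe]; ring
        · simp only [zero_mul, zero_add, mul_zero]
          exact h1.trans (by gcongr)
        · calc hopDist w' ((N + 1) * (h + 1) + h + 1) zr y
              = hopDist w' (h + (1 + (N + 1) * (h + 1))) zr y := by congr 1; ring
            _ ≤ hopDist w' h zr v + (hopDist w' 1 v v' + hopDist w' ((N + 1) * (h + 1)) v' y) :=
              (hop_tri w' _ _ zr v y).trans (add_le_add le_rfl (hop_tri w' _ _ v v' y))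
            _ ≤ 2 * τ + ((1 + a) * w v v' + (1 + a) * R) := by
              gcongr
              · exact h2.trans (by gcongr)
              · exact hedge.trans (hone _)
            _ = _ := by ring
        · calc graphDist w zl zr ≤ graphDist w zl u + (graphDist w u v + graphDist w v zr) :=
              (gd_tri w zl u zr).trans (add_le_add le_rfl (gd_tri w u v zr))
            _ ≤ 2 * τ + (L + 2 * τ) := by
              gcongr
              exact hL.gd
            _ = _ := by ring
        · calc graphDist w u zr ≤ graphDist w u v + graphDist w v zr := gd_tri w u v zr
            _ ≤ L + 2 * τ := by
              gcongr
              exact hL.gd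
            _ = _ := by ring
      · have e3 : graphDist w u zr' ≤ L + (w v v' + (R1 + M + 2 * τ)) := 
          calc graphDist w u zr' ≤ graphDist w u v + (graphDist w v v' + graphDist w v' zr') :=
              (gd_tri w u v zr').trans (add_le_add le_rfl (gd_tri w v v' zr'))
            _ ≤ _ := by
              gcongr
              exact hL.gd
        refine ⟨zl, hzl, zr', hzr', 0, N3, 0, L + w v v' + R1 + M, R3, by omega, ?_, ?_, g3, ?_, ?_⟩
        · rw [hDe, ← g1]; ring
        · simp only [zero_mul, zero_add, mul_zero]
          exact h1.trans (by gcongr)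
        · calc graphDist w zl zr' ≤ graphDist w zl u + graphDist w u zr' := gd_tri w zl u zr'
            _ ≤ 2 * τ + _ := add_le_add e1 e3
            _ = _ := by ring
        · refine e3.trans (le_of_eq (by ring))

theorem step {V : Type*} {w w' : V → V → ℝ≥0∞} (hs : ∀ a b, w a b = w b a)
    (hs' : ∀ a b, w' a b = w' b a) (hle : ∀ a b, graphDist w a b ≤ w' a b)
    (hww : ∀ a b, w' a b ≤ w a b)
    (A B : Set V) (h : ℕ) (a : ℝ≥0∞)
    (P : ∀ u v D, Wk w u v D → hopDist w' h u v ≤ (1 + a) * D ∨ ∃ z ∈ A, hopDist w' h u z ≤ 2 * D)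
    (Q : ∀ u ∈ A, ∀ v ∈ A, w' u v ≤ graphDist w u v ∨
      ∃ p ∈ B, w' u p ≤ graphDist w u p ∧ graphDist w u p ≤ graphDist w u v)
    (K : ℕ) (hK : 1 ≤ K) (ha : a + 6 / K ≤ 1) :
    ∀ u v D, Wk w u v D → hopDist w' ((K + 1) * (h + 1)) u v ≤ (1 + (a + 8 / K)) * D ∨
      ∃ z ∈ B, hopDist w' ((K + 1) * (h + 1)) u z ≤ 2 * D := by
  intro u v D hD
  by_cases hDt : D = ⊤
  · left; rw [hDt, ENNReal.mul_top (by simp)]; exact le_top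
  obtain ⟨N, rfl⟩ : ∃ N, K = N + 1 := ⟨K - 1, by omega⟩
  have hK0 : ((N + 1 : ℕ) : ℝ≥0∞) ≠ 0 := Nat.cast_ne_zero.2 (by omega)
  have hK1 : ((N + 1 : ℕ) : ℝ≥0∞) ≠ ⊤ := ENNReal.natCast_ne_top _
  set k : ℝ≥0∞ := ((N + 1 : ℕ) : ℝ≥0∞) with hk
  have hτ : D / k ≠ ⊤ := ENNReal.div_ne_top hDt hK0
  have hmul : k * (D / k) = D := ENNReal.mul_div_cancel hK0 hK1
  have h8 : ∀ m : ℝ≥0∞, m * (D / k) = m / k * D := by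
    intro m; simp only [div_eq_mul_inv]; ring
  rcases core hs hs' hle hww A h a (D / k) hτ P N u v D hD (by rw [← hk, hmul]) with
    h1 | ⟨zl, hzl, zr, hzr, N1, N3, R1, M, R3, g0, g1, g2, g3, g4, g5⟩
  · left
    refine (hop_mono (by nlinarith) _ _).trans (h1.trans ?_)
    gcongr
    simp
  have hone : ∀ X : ℝ≥0∞, X ≤ (1 + a) * X := fun X => by
    calc X = 1 * X := by simp
      _ ≤ _ := by gcongr; simp
  rcases Q zl hzl zr hzr with q | ⟨p, hp, q1, q2⟩
  · left
    calc hopDist w' ((N + 1 + 1) * (h + 1)) u v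
        ≤ hopDist w' ((N1 * (h + 1) + h) + (1 + (N3 * (h + 1) + h + 1))) u v := by
          refine hop_mono ?_ _ _
          have : (N1 + N3) * (h + 1) ≤ N * (h + 1) := Nat.mul_le_mul_right _ g0
          nlinarith
      _ ≤ hopDist w' (N1 * (h + 1) + h) u zl + (hopDist w' 1 zl zr + hopDist w' (N3 * (h + 1) + h + 1) zr v) :=
          (hop_tri w' _ _ u zl v).trans (add_le_add le_rfl (hop_tri w' _ _ zl zr v))
      _ ≤ ((1 + a) * R1 + 2 * (D / k)) + (((1 + a) * M + 4 * (D / k)) + ((1 + a) * R3 + 2 * (D / k))) := by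
          gcongr
          exact (hop_edge w' zl zr).trans (q.trans (g4.trans (add_le_add (hone M) le_rfl)))
      _ = (1 + a) * (R1 + M + R3) + 8 * (D / k) := by ring
      _ = _ := by rw [g1, h8]; ring
  · right
    refine ⟨p, hp, ?_⟩
    calc hopDist w' ((N + 1 + 1) * (h + 1)) u p
        ≤ hopDist w' ((N1 * (h + 1) + h) + 1) u p := by
          refine hop_mono ?_ _ _
          have : (N1 + N3) * (h + 1) ≤ N * (h + 1) := Nat.mul_le_mul_right _ g0
          nlinarith
      _ ≤ hopDist w' (N1 * (h + 1) + h) u zl + hopDist w' 1 zl p := hop_tri w' _ _ u zl p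
      _ ≤ ((1 + a) * R1 + 2 * (D / k)) + ((1 + a) * M + 4 * (D / k)) := by
          gcongr
          exact (hop_edge w' zl p).trans (q1.trans (q2.trans (g4.trans (add_le_add (hone M) le_rfl))))
      _ = (1 + a) * (R1 + M) + 6 * (D / k) := by ring
      _ ≤ (1 + a) * D + 6 * (D / k) := by
          gcongr
          rw [← g1]; exact le_self_add
      _ = (1 + (a + 6 / k)) * D := by rw [h8]; ring
      _ ≤ (1 + 1) * D := by gcongr
      _ = 2 * D := by ring

def hb (K : ℕ) : ℕ → ℕ
  | 0 => 1
  | i + 1 => (K + 1) * (hb K i + 1)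

theorem hb_le (K i : ℕ) : hb K i + 1 ≤ 2 * (K + 2) ^ i := by
  induction i with
  | zero => simp [hb]
  | succ i ih =>
    have h1 : 1 ≤ (hb K i + 1) := by omega
    calc hb K (i + 1) + 1 = (K + 1) * (hb K i + 1) + 1 := rfl
      _ ≤ (K + 2) * (hb K i + 1) := by nlinarith
      _ ≤ (K + 2) * (2 * (K + 2) ^ i) := Nat.mul_le_mul_left _ ih
      _ = _ := by ring

theorem iter {V : Type*} {w w' : V → V → ℝ≥0∞} (hs : ∀ a b, w a b = w b a)
    (hs' : ∀ a b, w' a b = w' b a) (hle : ∀ a b, graphDist w a b ≤ w' a b)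
    (hww : ∀ a b, w' a b ≤ w a b)
    (A : ℕ → Set V) (hA : A 0 = Set.univ) (l K : ℕ) (hK : 8 * (l + 1) ≤ K)
    (Q : ∀ i ≤ l, ∀ u ∈ A i, ∀ v ∈ A i, w' u v ≤ graphDist w u v ∨
      ∃ p ∈ A (i + 1), w' u p ≤ graphDist w u p ∧ graphDist w u p ≤ graphDist w u v) (i : ℕ) :
    i ≤ l → ∀ u v D, Wk w u v D → hopDist w' (hb K i) u v ≤ (1 + (i * 8 : ℕ) / (K : ℝ≥0∞)) * D ∨
      ∃ z ∈ A (i + 1), hopDist w' (hb K i) u z ≤ 2 * D := by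
  induction i with
  | zero =>
    intro _ u v D hD
    rcases Q 0 (by omega) u (by simp [hA]) v (by simp [hA]) with q | ⟨p, hp, q1, q2⟩
    · left
      simpa [hb] using (hop_edge w' u v).trans (q.trans hD.gd)
    · right
      refine ⟨p, hp, (hop_edge w' u p).trans (q1.trans (q2.trans (hD.gd.trans ?_)))⟩
      rw [two_mul]; exact le_self_add
  | succ i ih =>
    intro hi
    have := step hs hs' hle hww (A (i + 1)) (A (i + 1 + 1)) (hb K i) _ (ih (by omega)) (Q (i + 1) hi) K
      (by omega) (by
        rw [← ENNReal.add_div]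
        refine ENNReal.div_le_of_le_mul ?_
        rw [one_mul]
        exact_mod_cast (by omega))
    rw [← ENNReal.add_div] at this
    have e : (((i + 1) * 8 : ℕ) : ℝ≥0∞) = ((i * 8 : ℕ) : ℝ≥0∞) + 8 := by push_cast; ring
    rw [e]
    exact this

theorem final_bound {V : Type*} {w w' : V → V → ℝ≥0∞} (hs : ∀ a b, w a b = w b a)
    (hs' : ∀ a b, w' a b = w' b a) (hle : ∀ a b, graphDist w a b ≤ w' a b)
    (hww : ∀ a b, w' a b ≤ w a b)
    (A : ℕ → Set V) (hA : A 0 = Set.univ) (l K : ℕ) (hK : 8 * (l + 1) ≤ K)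
    (hAl : A (l + 1) = ∅)
    (Q : ∀ i ≤ l, ∀ u ∈ A i, ∀ v ∈ A i, w' u v ≤ graphDist w u v ∨
      ∃ p ∈ A (i + 1), w' u p ≤ graphDist w u p ∧ graphDist w u p ≤ graphDist w u v)
    (u v : V) : hopDist w' (hb K l) u v ≤ (1 + (l * 8 : ℕ) / (K : ℝ≥0∞)) * graphDist w u v := by
  have hK0 : (K : ℝ≥0∞) ≠ 0 := by exact_mod_cast (by omega)
  have h1 : (1 + (l * 8 : ℕ) / (K : ℝ≥0∞)) ≠ 0 := by simp
  have h2 : (1 + (l * 8 : ℕ) / (K : ℝ≥0∞)) ≠ ⊤ := by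
    simp only [ne_eq, ENNReal.add_eq_top, not_or]
    exact ⟨ENNReal.one_ne_top, ENNReal.div_ne_top (ENNReal.natCast_ne_top _) hK0⟩
  rw [mul_comm, ← ENNReal.div_le_iff h1 h2]
  refine le_gd fun D hD => ?_
  rw [ENNReal.div_le_iff h1 h2, mul_comm]
  rcases iter hs hs' hle hww A hA l K hK Q l le_rfl u v D hD with h | ⟨z, hz, _⟩
  · exact h
  · simp [hAl] at hz

theorem count_fun {α : Type*} [Fintype α] [DecidableEq α] (r : ℕ) (X : Finset α)
    (T : Finset (Fin (r + 1))) :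
    ((Finset.univ.filter (fun f : α → Fin (r + 1) => ∀ x ∈ X, f x ∈ T)).card : ℝ) =
      ((r : ℝ) + 1) ^ (Fintype.card α) * ((T.card : ℝ) / (r + 1)) ^ X.card := by
  have h1 : Finset.univ.filter (fun f : α → Fin (r + 1) => ∀ x ∈ X, f x ∈ T) =
      Fintype.piFinset (fun x => if x ∈ X then T else Finset.univ) := by
    ext f
    simp only [Finset.mem_filter, Finset.mem_univ, true_and, Fintype.mem_piFinset]
    refine forall_congr' fun x => ?_
    by_cases hx : x ∈ X <;> simp [hx]
  rw [h1, Fintype.card_piFinset]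
  have h2 : ∀ x, (if x ∈ X then T else Finset.univ).card = if x ∈ X then T.card else r + 1 := by
    intro x; split_ifs <;> simp
  simp only [h2]
  push_cast
  have hr : ((r : ℝ) + 1) ≠ 0 := by positivity
  have h3 : ∀ x, (if x ∈ X then (T.card : ℝ) else (r : ℝ) + 1) =
      ((r : ℝ) + 1) * (if x ∈ X then (T.card : ℝ) / (r + 1) else 1) := by
    intro x; split_ifs
    · field_simp
    · simp
  simp only [h3, Finset.prod_mul_distrib, Finset.prod_const, Finset.card_univ]
  congr 1
  rw [Finset.prod_ite_mem]
  simp [div_pow]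

theorem exists_sort {α : Type*} [Fintype α] (m : ℕ) (hm : m = Fintype.card α) (g : α → ℝ≥0∞) :
    ∃ σ : Fin m ≃ α, Monotone (g ∘ σ) := by
  subst hm
  let e := (Fintype.equivFin α).symm
  refine ⟨(Tuple.sort (g ∘ e)).trans e, ?_⟩
  exact Tuple.monotone_sort (g ∘ e)

theorem samp {α : Type*} [Fintype α] (d : α → α → ℝ≥0∞) (q : ℕ) (hq : 1 ≤ q) :
    ∃ (S : Finset α) (E : Finset (α × α)), 
      (q : ℝ) ^ 2 * S.card + E.card ≤ 2 * Fintype.card α * q ∧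
      ∀ u v, (u, v) ∈ E ∨ ∃ p ∈ S, (u, p) ∈ E ∧ d u p ≤ d u v := by
  classical
  obtain ⟨r, rfl⟩ : ∃ r, q = r + 1 := ⟨q - 1, by omega⟩
  obtain ⟨m, hm⟩ : ∃ m, m = Fintype.card α := ⟨_, rfl⟩
  choose σ hσ using fun u => exists_sort m hm (d u)
  let S : (α → Fin (r + 1)) → Finset α := fun f => Finset.univ.filter (fun v => f v = 0)
  let E : (α → Fin (r + 1)) → Finset (α × α) := fun f => Finset.univ.filter (fun p =>
    ∀ x ∈ Finset.univ.filter (fun x => (σ p.1).symm x < (σ p.1).symm p.2), f x ∈ ({0}ᶜ : Finset (Fin (r + 1))))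
  have hr : (0 : ℝ) < (r : ℝ) + 1 := by positivity
  have hS : ∑ f, ((S f).card : ℝ) = m * ((r : ℝ) + 1) ^ m / (r + 1) := by
    simp only [S, Finset.card_filter, Nat.cast_sum]
    rw [Finset.sum_comm]
    have : ∀ v : α, ∑ f : α → Fin (r + 1), (((if f v = 0 then 1 else 0 : ℕ)) : ℝ) =
        ((r : ℝ) + 1) ^ m / (r + 1) := by
      intro v
      have := count_fun r ({v} : Finset α) {0}
      simp only [Finset.card_filter, Finset.mem_singleton, forall_eq, Nat.cast_sum] at this
      rw [this]; simp [hm, div_eq_mul_inv]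
    simp only [this, Finset.sum_const, Finset.card_univ, nsmul_eq_mul, ← hm]
    ring
  have hE : ∑ f, ((E f).card : ℝ) ≤ m * ((r : ℝ) + 1) ^ m * (r + 1) := by
    simp only [E, Finset.card_filter, Nat.cast_sum]
    rw [Finset.sum_comm, Fintype.sum_prod_type]
    have : ∀ u : α, ∑ v : α, ∑ f : α → Fin (r + 1), 
        (((if ∀ x ∈ Finset.univ.filter (fun x => (σ u).symm x < (σ u).symm v), f x ∈ ({0}ᶜ : Finset (Fin (r + 1))) then 1 else 0 : ℕ)) : ℝ) ≤
        ((r : ℝ) + 1) ^ m * (r + 1) := by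
      intro u
      have h1 : ∀ v, ∑ f : α → Fin (r + 1), 
        (((if ∀ x ∈ Finset.univ.filter (fun x => (σ u).symm x < (σ u).symm v), f x ∈ ({0}ᶜ : Finset (Fin (r + 1))) then 1 else 0 : ℕ)) : ℝ) = 
        ((r : ℝ) + 1) ^ m * ((r : ℝ) / (r + 1)) ^ (((σ u).symm v : Fin m) : ℕ) := by
        intro v
        have h2 := count_fun r (Finset.univ.filter (fun x => (σ u).symm x < (σ u).symm v)) {0}ᶜ
        rw [Finset.card_filter, Nat.cast_sum] at h2
        rw [h2, Finset.card_compl]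
        have h3 : (Finset.univ.filter (fun x => (σ u).symm x < (σ u).symm v)).card = ((σ u).symm v : Fin m) := by
          rw [← Fin.card_Iio ((σ u).symm v)]
          refine Finset.card_bij (fun x _ => (σ u).symm x) ?_ ?_ ?_
          · intro x hx; simpa using hx
          · intro x _ y _ h; exact (σ u).symm.injective h
          · intro j hj; exact ⟨σ u j, by simpa using hj, by simp⟩
        rw [h3]; simp [hm]
      simp only [h1]
      rw [← Finset.mul_sum]
      gcongr
      rw [Equiv.sum_comp (σ u).symm (fun j : Fin m => ((r : ℝ) / (r + 1)) ^ (j : ℕ)), 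
        Fin.sum_univ_eq_sum_range (fun j => ((r : ℝ) / (r + 1)) ^ j)]
      have hlt : (r : ℝ) / (r + 1) < 1 := by rw [div_lt_one hr]; linarith
      have hne : (r : ℝ) / (r + 1) ≠ 1 := hlt.ne
      have h5 := geom_sum_mul ((r : ℝ) / (r + 1)) m
      have h6 : (r : ℝ) / (r + 1) - 1 = - (1 / (r + 1)) := by field_simp; ring
      rw [h6] at h5
      have h7 : 0 ≤ ((r : ℝ) / (r + 1)) ^ m := by positivity
      have h8 : (∑ i ∈ Finset.range m, ((r : ℝ) / (r + 1)) ^ i) * (1 / (r + 1)) ≤ 1 := by linarith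
      rwa [mul_one_div, div_le_one hr] at h8
    calc _ ≤ ∑ u : α, ((r : ℝ) + 1) ^ m * (r + 1) := Finset.sum_le_sum fun u _ => this u
      _ = _ := by simp [hm]; ring
  obtain ⟨f, -, hf⟩ := Finset.exists_le_of_sum_le (s := (Finset.univ : Finset (α → Fin (r + 1))))
    (f := fun f => ((r : ℝ) + 1) ^ 2 * (S f).card + (E f).card) (g := fun _ => 2 * (m : ℝ) * (r + 1))
    Finset.univ_nonempty (by
      rw [Finset.sum_add_distrib, ← Finset.mul_sum, hS]
      simp only [Finset.sum_const, Finset.card_univ, Fintype.card_fun, Fintype.card_fin, nsmul_eq_mul, ← hm]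
      push_cast
      have : ((r : ℝ) + 1) ^ 2 * (m * ((r : ℝ) + 1) ^ m / (r + 1)) = m * ((r : ℝ) + 1) ^ m * (r + 1) := by
        field_simp
      rw [this]; linarith)
  refine ⟨S f, E f, by rw [← hm]; push_cast; exact hf, ?_⟩
  intro u v
  by_cases huv : (u, v) ∈ E f
  · exact Or.inl huv
  right
  simp only [E, S, Finset.mem_filter, Finset.mem_univ, true_and, Finset.mem_compl, Finset.mem_singleton, not_forall, not_not, exists_prop] at huv ⊢
  obtain ⟨x, hx, hfx⟩ := huv
  obtain ⟨p, hp, hmin⟩ := Finset.exists_min_image (Finset.univ.filter (fun v => f v = 0)) (fun v => (σ u).symm v) ⟨x, by simpa using hfx⟩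
  simp only [Finset.mem_filter, Finset.mem_univ, true_and] at hp hmin
  refine ⟨p, hp, ?_, ?_⟩
  · intro y hy hfy
    exact absurd (hmin y hfy) (not_le.2 hy)
  · have h1 : (σ u).symm p ≤ (σ u).symm v := (hmin x hfx).trans hx.le
    simpa using hσ u h1

theorem sampF {V : Type*} (d : V → V → ℝ≥0∞) (A : Finset V) (q : ℕ) (hq : 1 ≤ q) :
    ∃ (S : Finset V) (E : Finset (V × V)),
      (q : ℝ) ^ 2 * S.card + E.card ≤ 2 * A.card * q ∧
      ∀ u ∈ A, ∀ v ∈ A, (u, v) ∈ E ∨ ∃ p ∈ S, (u, p) ∈ E ∧ d u p ≤ d u v := by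
  obtain ⟨S, E, h1, h2⟩ := samp (α := A) (fun a b => d a b) q hq
  refine ⟨S.map (Function.Embedding.subtype _),
    E.map ((Function.Embedding.subtype _).prodMap (Function.Embedding.subtype _)), ?_, ?_⟩
  · simpa using h1
  · intro u hu v hv
    rcases h2 ⟨u, hu⟩ ⟨v, hv⟩ with h | ⟨p, hp, h, h'⟩
    · left
      exact Finset.mem_map.2 ⟨_, h, rfl⟩
    · right
      exact ⟨p, Finset.mem_map.2 ⟨_, hp, rfl⟩, Finset.mem_map.2 ⟨_, h, rfl⟩, h'⟩

theorem hier {V : Type*} [Fintype V] (d : V → V → ℝ≥0∞) (hn : 2 ≤ Fintype.card V) (κ l : ℕ)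
    (hκ : 1 ≤ κ) (hl : κ + 1 ≤ 2 ^ (l + 1)) :
    ∃ (A : ℕ → Finset V) (E : Finset (V × V)), A 0 = Finset.univ ∧ A (l + 1) = ∅ ∧
      (∀ i ≤ l, ∀ u ∈ A i, ∀ v ∈ A i, (u, v) ∈ E ∨
        ∃ p ∈ A (i + 1), (u, p) ∈ E ∧ d u p ≤ d u v) ∧
      (E.card : ℝ) ≤ 17 * (Fintype.card V : ℝ) ^ ((1 : ℝ) + 1 / (κ : ℝ)) *
              Real.logb 2 (Fintype.card V) := by
  classical
  set n := Fintype.card V with hnn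
  have hnR : (2 : ℝ) ≤ n := by exact_mod_cast hn
  have hn0 : (0 : ℝ) < n := by linarith
  have hκ0 : (0 : ℝ) < κ := by exact_mod_cast hκ
  obtain ⟨a, ha⟩ : ∃ a : ℝ, a = (n : ℝ) ^ (1 / (κ : ℝ)) := ⟨_, rfl⟩
  have ha1 : 1 < a := by rw [ha]; exact Real.one_lt_rpow (by linarith) (by positivity)
  have haκ : a ^ κ = n := by
    rw [ha, ← Real.rpow_natCast, ← Real.rpow_mul hn0.le]
    field_simp
    simp
  have hna : (n : ℝ) ^ ((1 : ℝ) + 1 / (κ : ℝ)) = n * a := by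
    rw [Real.rpow_add hn0, Real.rpow_one, ha]
  rw [hna]
  let c : ℕ → ℕ := fun i => ⌈a ^ (2 ^ i)⌉₊
  have hc1 : ∀ i, a ^ (2 ^ i) ≤ c i := fun i => Nat.le_ceil _
  have hai : ∀ i, 1 < a ^ (2 ^ i) := fun i => one_lt_pow₀ ha1 (by positivity)
  have hc2 : ∀ i, (2 : ℝ) ≤ c i := fun i => by
    have : (1 : ℝ) < c i := (hai i).trans_le (hc1 i)
    have : 1 < c i := by exact_mod_cast this
    exact_mod_cast this
  have hc3 : ∀ i, (c i : ℝ) ≤ 2 * a ^ (2 ^ i) := fun i => by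
    have := (Nat.ceil_lt_add_one (zero_le_one.trans (hai i).le)).le
    have h2 := hai i
    change (c i : ℝ) ≤ _ at this
    linarith
  have hq : ∀ i, 1 ≤ 2 * c i := fun i => by
    have := hc2 i
    have : 2 ≤ c i := by exact_mod_cast this
    omega
  choose S E hSE hQ using fun (A : Finset V) (i : ℕ) => sampF d A (2 * c i) (hq i)
  let A : ℕ → Finset V := fun i => Nat.rec Finset.univ (fun i B => S B i) i
  have hA0 : A 0 = Finset.univ := rfl
  have hAs : ∀ i, A (i + 1) = S (A i) i := fun i => rfl
  have hcA : ∀ i, (c i : ℝ) * (A (i + 1)).card ≤ (A i).card := by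
    intro i
    have h1 := hSE (A i) i
    rw [← hAs] at h1
    push_cast at h1
    have h2 : (0 : ℝ) ≤ (E (A i) i).card := by positivity
    have h3 := hc2 i
    have h4 : (4 * c i : ℝ) * (c i * (A (i + 1)).card) ≤ (4 * c i) * (A i).card := by nlinarith
    exact le_of_mul_le_mul_left h4 (by linarith)
  have hpow : ∀ i, ((A i).card : ℝ) * a ^ (2 ^ i) ≤ n * a := by
    intro i
    induction i with
    | zero => simp [hA0, hnn]
    | succ i ih =>
      refine le_trans ?_ ih
      have h1 : a ^ (2 ^ (i + 1)) = a ^ (2 ^ i) * a ^ (2 ^ i) := by rw [← pow_add]; congr 1; ring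
      rw [h1, ← mul_assoc]
      have h2 := hai i
      gcongr
      refine le_trans ?_ (hcA i)
      rw [mul_comm]
      gcongr
      exact hc1 i
  have htwo : ∀ i, 2 ^ i * ((A i).card : ℝ) ≤ n := by
    intro i
    induction i with
    | zero => simp [hA0, hnn]
    | succ i ih =>
      refine le_trans ?_ ih
      rw [pow_succ, mul_assoc]
      gcongr
      refine le_trans ?_ (hcA i)
      gcongr
      exact hc2 i
  have hEc : ∀ i, ((E (A i) i).card : ℝ) ≤ 8 * (n * a) := by
    intro i
    have h1 := hSE (A i) i
    push_cast at h1
    have h2 : (0 : ℝ) ≤ (2 * c i : ℝ) ^ 2 * (S (A i) i).card := by positivity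
    have h3 : (0 : ℝ) ≤ (A i).card := by positivity
    have h4 := hpow i
    have h5 := mul_le_mul_of_nonneg_left (hc3 i) h3
    nlinarith
  have hE0 : ∀ i, Nat.log 2 n < i → ((E (A i) i).card : ℝ) ≤ 0 := by
    intro i hi
    have h1 : n < 2 ^ i := Nat.lt_pow_of_log_lt (by norm_num) hi
    have h2 : 2 ^ i * (A i).card ≤ n := by exact_mod_cast htwo i
    have h3 : (A i).card = 0 := by
      by_contra h
      have : 1 ≤ (A i).card := by omega
      nlinarith
    have h4 := hSE (A i) i
    rw [h3] at h4
    have h2 : (0 : ℝ) ≤ ((2 * c i : ℕ) : ℝ) ^ 2 * (S (A i) i).card := by positivity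
    simp only [Nat.cast_zero, mul_zero, zero_mul] at h4
    linarith
  have hlog : ((Nat.log 2 n : ℕ) : ℝ) ≤ Real.logb 2 n := by
    exact_mod_cast Real.natLog_le_logb n 2
  have hlog1 : 1 ≤ Real.logb 2 n := by
    rw [Real.le_logb_iff_rpow_le (by norm_num) hn0]; simpa using hnR
  have hna0 : 0 < n * a := by positivity
  have hsum : ∑ i ∈ Finset.range l, ((E (A i) i).card : ℝ) ≤ 16 * (n * a) * Real.logb 2 n := by
    calc _ ≤ ∑ i ∈ Finset.range l, (if i ∈ Finset.range (Nat.log 2 n + 1) then 8 * (n * a) else 0) := by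
          refine Finset.sum_le_sum fun i _ => ?_
          split_ifs with h
          · exact hEc i
          · exact hE0 i (by simp at h; omega)
      _ = ((Finset.range l ∩ Finset.range (Nat.log 2 n + 1)).card : ℝ) * (8 * (n * a)) := by
          rw [Finset.sum_ite_mem]; simp
      _ ≤ ((Nat.log 2 n + 1 : ℕ) : ℝ) * (8 * (n * a)) := by
          gcongr
          refine (Finset.card_le_card Finset.inter_subset_right).trans (by simp)
      _ ≤ (2 * Real.logb 2 n) * (8 * (n * a)) := by
          gcongr
          push_cast; linarith
      _ = _ := by ring
  have hlast : ((A l).card : ℝ) * (A l).card ≤ n * a := by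
    have h1 := hpow l
    have h2 : a ^ (κ + 1) ≤ a ^ (2 ^ l) * a ^ (2 ^ l) := by
      rw [← pow_add]
      exact pow_le_pow_right₀ ha1.le (by rw [pow_succ] at hl; omega)
    have h3 : n * a ≤ a ^ (2 ^ l) * a ^ (2 ^ l) := by rwa [pow_succ, haκ] at h2
    have h4 : (((A l).card : ℝ) * a ^ (2 ^ l)) * (((A l).card : ℝ) * a ^ (2 ^ l)) ≤ (n * a) * (n * a) :=
      mul_le_mul h1 h1 (by have := hai l; positivity) hna0.le
    have h5 : (((A l).card : ℝ) * (A l).card) * (n * a) ≤ (n * a) * (n * a) := by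
      refine le_trans ?_ h4
      calc _ ≤ (((A l).card : ℝ) * (A l).card) * (a ^ (2 ^ l) * a ^ (2 ^ l)) := by gcongr
        _ = _ := by ring
    exact le_of_mul_le_mul_right h5 hna0
  refine ⟨fun i => if i ≤ l then A i else ∅,
    (Finset.range l).biUnion (fun i => E (A i) i) ∪ (A l ×ˢ A l), by simp [hA0], by simp, ?_, ?_⟩
  · intro i hi u hu v hv
    simp only [hi, if_true] at hu hv
    rcases hi.lt_or_eq with hlt | rfl
    · rcases hQ (A i) i u hu v hv with h | ⟨p, hp, h, h'⟩
      · left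
        exact Finset.mem_union_left _ (Finset.mem_biUnion.2 ⟨i, Finset.mem_range.2 hlt, h⟩)
      · right
        refine ⟨p, ?_, Finset.mem_union_left _ (Finset.mem_biUnion.2 ⟨i, Finset.mem_range.2 hlt, h⟩), h'⟩
        show p ∈ (if i + 1 ≤ l then A (i + 1) else ∅)
        rw [if_pos (by omega)]
        exact hp
    · left
      exact Finset.mem_union_right _ (Finset.mem_product.2 ⟨hu, hv⟩)
  · have h1 : (((Finset.range l).biUnion (fun i => E (A i) i) ∪ (A l ×ˢ A l)).card : ℝ) ≤
        ∑ i ∈ Finset.range l, ((E (A i) i).card : ℝ) + ((A l).card : ℝ) * (A l).card := by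
      have := (Finset.card_union_le ((Finset.range l).biUnion (fun i => E (A i) i)) (A l ×ˢ A l)).trans
        (add_le_add Finset.card_biUnion_le le_rfl)
      rw [Finset.card_product] at this
      exact_mod_cast this
    have h2 : n * a * 1 ≤ n * a * Real.logb 2 n := by gcongr
    linarith

theorem ell_pow (κ l : ℕ) (ρ : ℝ) (hκ : 2 ≤ κ) (hρ : 0 < ρ) (h1 : 1 ≤ (κ : ℝ) * ρ)
    (hρ2 : ρ < 1 / 2)
    (hl : l = ⌊Real.logb 2 ((κ : ℝ) * ρ)⌋₊ + ⌈((κ : ℝ) + 1) / ((κ : ℝ) * ρ)⌉₊ - 1) :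
    κ + 1 ≤ 2 ^ (l + 1) ∧ 1 ≤ l ∧ (l : ℝ) + 1 ≤ 2 * (Real.logb 2 ((κ : ℝ) * ρ) + 1 / ρ) := by
  have hκ0 : (0 : ℝ) < κ := by positivity
  have hκρ : (0 : ℝ) < κ * ρ := by positivity
  have hy : ((κ : ℝ) + 1) / ((κ : ℝ) * ρ) = 1 / ρ + 1 / (κ * ρ) := by field_simp
  have hρ3 : 2 < 1 / ρ := by rw [lt_div_iff₀ hρ]; linarith
  have hinv : 1 / ((κ : ℝ) * ρ) ≤ 1 := by rw [div_le_one hκρ]; exact h1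
  have hinv0 : 0 < 1 / ((κ : ℝ) * ρ) := by positivity
  have hL : 0 ≤ Real.logb 2 ((κ : ℝ) * ρ) := Real.logb_nonneg (by norm_num) h1
  obtain ⟨f, hf⟩ : ∃ f, f = ⌊Real.logb 2 ((κ : ℝ) * ρ)⌋₊ := ⟨_, rfl⟩
  obtain ⟨m, hm⟩ : ∃ m, m = ⌈((κ : ℝ) + 1) / ((κ : ℝ) * ρ)⌉₊ := ⟨_, rfl⟩
  rw [← hf, ← hm] at hl
  have hm1 : ((κ : ℝ) + 1) / ((κ : ℝ) * ρ) ≤ m := by rw [hm]; exact Nat.le_ceil _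
  have hm2 : (m : ℝ) < ((κ : ℝ) + 1) / ((κ : ℝ) * ρ) + 1 := by
    rw [hm]; exact Nat.ceil_lt_add_one (by positivity)
  have hf1 : (f : ℝ) ≤ Real.logb 2 ((κ : ℝ) * ρ) := by rw [hf]; exact Nat.floor_le hL
  have hf2 : Real.logb 2 ((κ : ℝ) * ρ) < f + 1 := by rw [hf]; exact Nat.lt_floor_add_one _
  have hm3 : 2 < m := by
    have : (2 : ℝ) < m := by rw [hy] at hm1; linarith
    exact_mod_cast this
  have hl1 : (l : ℝ) = f + m - 1 := by
    have : l + 1 = f + m := by omega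
    have : (l : ℝ) + 1 = f + m := by exact_mod_cast this
    linarith
  refine ⟨?_, by omega, ?_⟩
  · have h2 : (κ : ℝ) * ρ < 2 ^ (f + 1) := by
      rw [Real.logb_lt_iff_lt_rpow (by norm_num) hκρ] at hf2
      exact_mod_cast hf2
    have h3 : m ≤ 2 ^ (m - 1) := by
      have : m - 1 < 2 ^ (m - 1) := Nat.lt_two_pow_self
      omega
    have h3' : (m : ℝ) ≤ 2 ^ (m - 1) := by exact_mod_cast h3
    have h4 : (κ : ℝ) + 1 ≤ m * (κ * ρ) := (div_le_iff₀ hκρ).1 hm1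
    have h5 : (κ : ℝ) + 1 ≤ 2 ^ (l + 1) := by
      have : l + 1 = (m - 1) + (f + 1) := by omega
      rw [this, pow_add]
      refine h4.trans ?_
      gcongr
    exact_mod_cast h5
  · rw [hl1]; rw [hy] at hm2; linarith

/-- existence form of the aspect-ratio-free hopset theorem
(Theorem C.1, without the computational complexity claims). -/
theorem aspect_ratio_free_hopset_existence :
    ∃ c : ℝ, 0 < c ∧
      ∀ (V : Type) (_ : Fintype V) (w : V → V → ℝ≥0∞),
        (∀ a b, w a b = w b a) →
        (∀ a b, a ≠ b → 0 < w a b) →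
        (∀ a b, graphDist w a b < ⊤) →
        2 ≤ Fintype.card V →
        ∀ ε : ℝ, 0 < ε → ε < 1 / 2 →
        ∀ κ : ℕ, 2 ≤ κ →
        ∀ ρ : ℝ, 0 < ρ → ρ < 1 / 2 → 1 ≤ (κ : ℝ) * ρ →
        ∀ ℓ : ℕ,
          ℓ = ⌊Real.logb 2 ((κ : ℝ) * ρ)⌋₊ + ⌈((κ : ℝ) + 1) / ((κ : ℝ) * ρ)⌉₊ - 1 →
        ∀ β : ℕ,
          β = ⌈(c * (Real.logb 2 (Fintype.card V)) ^ 2 *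
                (Real.logb 2 ((κ : ℝ) * ρ) + 1 / ρ) / ε) ^ ℓ⌉₊ →
        ∃ wH : V → V → ℝ≥0∞,
          (Set.ncard {pr : V × V | wH pr.1 pr.2 ≠ ⊤} : ℝ) ≤
            c * (Fintype.card V : ℝ) ^ ((1 : ℝ) + 1 / (κ : ℝ)) *
              Real.logb 2 (Fintype.card V) ∧
          ∀ u v : V,
            graphDist w u v ≤
                hopDist (fun a b => min (w a b) (wH a b)) β u v ∧
              hopDist (fun a b => min (w a b) (wH a b)) β u v ≤
                ENNReal.ofReal (1 + ε) * graphDist w u v := by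
  
  classical
  refine ⟨100, by norm_num, ?_⟩
  intro V _ w hs _ _ hn ε hε hε2 κ hκ ρ hρ hρ2 hκρ l hl β hβ
  obtain ⟨hl1, hl2, hl3⟩ := ell_pow κ l ρ hκ hρ hκρ hρ2 hl
  obtain ⟨A, E, hA0, hAl, hQ, hE⟩ := hier (graphDist w) hn κ l (by omega) hl1
  have hnR : (2 : ℝ) ≤ (Fintype.card V : ℝ) := by exact_mod_cast hn
  have hlog1 : 1 ≤ Real.logb 2 (Fintype.card V) := by
    rw [Real.le_logb_iff_rpow_le (by norm_num) (by linarith)]; simpa using hnR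
  have hnpos : 0 < (Fintype.card V : ℝ) ^ ((1 : ℝ) + 1 / (κ : ℝ)) * Real.logb 2 (Fintype.card V) := by
    have : (0 : ℝ) < (Fintype.card V : ℝ) := by linarith
    positivity
  let wH : V → V → ℝ≥0∞ := fun a b => if (a, b) ∈ E ∨ (b, a) ∈ E then graphDist w a b else ⊤
  have hgw : ∀ a b, graphDist w a b ≤ w a b := fun a b =>
    (gd_le_hop w 1 a b).trans (hop_edge w a b)
  have hle : ∀ a b, graphDist w a b ≤ min (w a b) (wH a b) := by
    intro a b
    refine le_min (hgw a b) ?_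
    simp only [wH]
    split_ifs
    · exact le_rfl
    · exact le_top
  refine ⟨wH, ?_, ?_⟩
  · have hsub : {pr : V × V | wH pr.1 pr.2 ≠ ⊤} ⊆ ((E ∪ E.image Prod.swap : Finset (V × V)) : Set (V × V)) := by
      rintro ⟨a, b⟩ h
      simp only [wH, Set.mem_ofPred_eq] at h
      by_cases hab : (a, b) ∈ E ∨ (b, a) ∈ E
      · simp only [Finset.coe_union, Set.mem_union, Finset.mem_coe, Finset.mem_image]
        rcases hab with h | h
        · exact Or.inl h
        · exact Or.inr ⟨(b, a), h, rfl⟩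
      · rw [if_neg hab] at h; exact absurd rfl h
    have h1 := Set.ncard_le_ncard hsub (Finset.finite_toSet _)
    rw [Set.ncard_coe_finset] at h1
    have h2 : Set.ncard {pr : V × V | wH pr.1 pr.2 ≠ ⊤} ≤ E.card + E.card :=
      h1.trans ((Finset.card_union_le _ _).trans (add_le_add le_rfl Finset.card_image_le))
    have h3 : (Set.ncard {pr : V × V | wH pr.1 pr.2 ≠ ⊤} : ℝ) ≤ E.card + E.card := by exact_mod_cast h2
    linarith
  intro u v
  refine ⟨gd_le_hop_of_le hle β u v, ?_⟩
  obtain ⟨K, hKd⟩ : ∃ K, K = ⌈8 * ((l : ℝ) + 1) / ε⌉₊ := ⟨_, rfl⟩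
  have hK1 : 8 * ((l : ℝ) + 1) / ε ≤ K := by rw [hKd]; exact Nat.le_ceil _
  have hK2 : (K : ℝ) < 8 * ((l : ℝ) + 1) / ε + 1 := by
    rw [hKd]; exact Nat.ceil_lt_add_one (by positivity)
  have hK3 : 8 * ((l : ℝ) + 1) ≤ K * ε := (div_le_iff₀ hε).1 hK1
  have hK : 8 * (l + 1) ≤ K := by
    have h0 : (0 : ℝ) ≤ K := by positivity
    have : 8 * ((l : ℝ) + 1) ≤ K := by nlinarith
    exact_mod_cast this
  have hfin := final_bound (w' := fun a b => min (w a b) (wH a b)) hs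
    (by
      intro a b
      simp only [wH]
      rw [hs a b, gd_symm hs a b]
      simp only [or_comm])
    hle (fun a b => min_le_left _ _) (fun i => (A i : Set V)) (by simp [hA0]) l K hK (by simp [hAl])
    (by
      have hmin : ∀ a b, (a, b) ∈ E → min (w a b) (wH a b) ≤ graphDist w a b := by
        intro a b h
        refine (min_le_right _ _).trans ?_
        simp [wH, h]
      intro i hi a ha b hb
      rcases hQ i hi a ha b hb with h | ⟨p, hp, h, h'⟩
      · exact Or.inl (hmin a b h)
      · exact Or.inr ⟨p, hp, hmin a p h, h'⟩) u v
  have hβ' : hb K l ≤ β := by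
    obtain ⟨X, hX⟩ : ∃ X, X = Real.logb 2 ((κ : ℝ) * ρ) + 1 / ρ := ⟨_, rfl⟩
    rw [← hX] at hl3 hβ
    have hl0 : (1 : ℝ) ≤ l := by exact_mod_cast hl2
    have h1 : ((hb K l : ℕ) : ℝ) ≤ 2 * ((K : ℝ) + 2) ^ l := by
      have := (Nat.le_succ _).trans (hb_le K l)
      exact_mod_cast this
    have h2 : (2 : ℝ) * ((K : ℝ) + 2) ^ l ≤ (2 * ((K : ℝ) + 2)) ^ l := by
      rw [mul_pow]
      gcongr
      exact le_self_pow₀ (by norm_num) (by omega)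
    have h3 : 2 * ((K : ℝ) + 2) ≤ 100 * (Real.logb 2 (Fintype.card V)) ^ 2 * X / ε := by
      have hX0 : 1 ≤ X := by linarith
      have h4 : (1 : ℝ) ≤ (Real.logb 2 (Fintype.card V)) ^ 2 := one_le_pow₀ hlog1
      rw [le_div_iff₀ hε]
      have h5 : (K : ℝ) * ε ≤ 8 * (l + 1) + ε := by
        have := mul_le_mul_of_nonneg_right hK2.le hε.le
        rw [add_mul, div_mul_cancel₀ _ hε.ne'] at this
        linarith
      have h6 : 100 * X ≤ 100 * (Real.logb 2 (Fintype.card V)) ^ 2 * X := by nlinarith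
      nlinarith
    have h4 : ((hb K l : ℕ) : ℝ) ≤ (100 * (Real.logb 2 (Fintype.card V)) ^ 2 * X / ε) ^ l :=
      h1.trans (h2.trans (by gcongr))
    have h5 := h4.trans (Nat.le_ceil _)
    rw [← hβ] at h5
    exact_mod_cast h5
  refine (hop_mono hβ' u v).trans (hfin.trans ?_)
  gcongr
  rw [ENNReal.ofReal_add (by norm_num) hε.le, ENNReal.ofReal_one]
  gcongr
  have hKpos : (0 : ℝ) < K := by
    have : 0 < K := by omega
    exact_mod_cast this
  refine ENNReal.div_le_of_le_mul ?_
  rw [← ENNReal.ofReal_natCast, ← ENNReal.ofReal_natCast, ← ENNReal.ofReal_mul hε.le]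
  refine ENNReal.ofReal_le_ofReal ?_
  push_cast
  linarith
end
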